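/- (Theorem 2.1(c)) Let G ⊆ [0,∞) be a Borel set and β ∈ (0, d). Assume the Khoshnevisan–Xiao equivalence holds for X, i.e., C_β(X(G)) = 0 P-almost surely if and only if for every μ ∈ P(G), ∫_{ℝ^d} [∫∫_{G×G} Re χ_ξ(t−s) μ(dt) μ(ds)] ‖ξ‖^{β−d} dξ = +∞ (here X(G) = {X_t(ω) : t ∈ G} is the random image set and C_β is the capacity on Borel subsets of ℝ^d with kernel z ↦ ‖z‖^{−β}). Then C_β(X(G)) = 0 P-almost surely implies C_{g_{d−β,+}}(G) = 0. -/

import Mathlib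

open MeasureTheory Complex
open scoped RealInnerProductSpace ENNReal

noncomputable section

/-- `χ_ξ(x) = exp(−|x| Ψ(sign(x) ξ))`. -/
def chi {d : ℕ} (Ψ : EuclideanSpace ℝ (Fin d) → ℂ) (ξ : EuclideanSpace ℝ (Fin d)) (x : ℝ) : ℂ :=
  Complex.exp (((-|x| : ℝ) : ℂ) * Ψ (Real.sign x • ξ))

/-- `g_{γ,+}(x) = ∫_{ℝ^d} (Re χ_ξ(x))_+ ‖ξ‖^{−γ} dξ`, with values in `[0,∞]`. -/
def gplus {d : ℕ} (Ψ : EuclideanSpace ℝ (Fin d) → ℂ) (γ : ℝ) (x : ℝ) : ℝ≥0∞ :=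
  ∫⁻ ξ : EuclideanSpace ℝ (Fin d),
    ENNReal.ofReal (max ((chi Ψ ξ x).re) 0) * (ENNReal.ofReal ‖ξ‖) ^ (-γ) ∂volume

/-- `g_{γ,−}(x) = ∫_{ℝ^d} (Re χ_ξ(x))_− ‖ξ‖^{−γ} dξ`, with values in `[0,∞]`. -/
def gminus {d : ℕ} (Ψ : EuclideanSpace ℝ (Fin d) → ℂ) (γ : ℝ) (x : ℝ) : ℝ≥0∞ :=
  ∫⁻ ξ : EuclideanSpace ℝ (Fin d),
    ENNReal.ofReal (max (-(chi Ψ ξ x).re) 0) * (ENNReal.ofReal ‖ξ‖) ^ (-γ) ∂volume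

/-- The `f`-energy `E_f(μ) = ∫∫_{G×G} f(t−s) μ(dt)μ(ds)` of a measure on `ℝ`,
for a `[0,∞]`-valued kernel `f`. -/
def energyR (f : ℝ → ℝ≥0∞) (G : Set ℝ) (μ : Measure ℝ) : ℝ≥0∞ :=
  ∫⁻ t in G, ∫⁻ s in G, f (t - s) ∂μ ∂μ

/-- The `f`-capacity `C_f(G) = [inf_{μ ∈ P(G)} E_f(μ)]⁻¹` (with `1/∞ = 0`), the infimum
being over Borel probability measures supported in `G`. -/
def capacityR (f : ℝ → ℝ≥0∞) (G : Set ℝ) : ℝ≥0∞ :=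
  (⨅ (μ : Measure ℝ) (_ : IsProbabilityMeasure μ ∧ μ Gᶜ = 0), energyR f G μ)⁻¹

/-- The Bessel–Riesz capacity `C_β(B) = [inf_ν ∫∫_{B×B} ‖x−y‖^{−β} ν(dx)ν(dy)]⁻¹` on Borel
subsets of `ℝ^d`, the infimum over Borel probability measures supported in `B`. -/
def capacityBeta {d : ℕ} (β : ℝ) (B : Set (EuclideanSpace ℝ (Fin d))) : ℝ≥0∞ :=
  (⨅ (ν : Measure (EuclideanSpace ℝ (Fin d))) (_ : IsProbabilityMeasure ν ∧ ν Bᶜ = 0),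
    ∫⁻ x in B, ∫⁻ y in B, (ENNReal.ofReal ‖x - y‖) ^ (-β) ∂ν ∂ν)⁻¹

/-! By Tonelli's theorem the `g_{γ,+}`-energy of `μ` is the integral of `E_{(Re χ_ξ)₊}(μ)` against
`‖ξ‖^{−γ} dξ`, and `E_{(Re χ_ξ)₊}(μ) ≥ E_{Re χ_ξ}(μ)` for every `ξ`. So if the integral of
`E_{Re χ_ξ}(μ)` diverges for every `μ ∈ P(G)`, then every `g_{γ,+}`-energy is infinite. The
Khoshnevisan–Xiao equivalence provides the divergence, with `γ = d − β`. -/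

theorem ofReal_integral_le_lintegral_ofReal {α : Type*} [MeasurableSpace α] (μ : Measure α)
    (f : α → ℝ) : ENNReal.ofReal (∫ x, f x ∂μ) ≤ ∫⁻ x, ENNReal.ofReal (f x) ∂μ := by
  by_cases hf : Integrable f μ
  · rw [integral_eq_lintegral_pos_part_sub_lintegral_neg_part hf]
    exact (ENNReal.ofReal_le_ofReal (sub_le_self _ ENNReal.toReal_nonneg)).trans
      ENNReal.ofReal_toReal_le
  · rw [integral_undef hf, ENNReal.ofReal_zero]
    exact zero_le

section Energy

variable (G : Set ℝ) (μ : Measure ℝ)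

theorem ofReal_setIntegral_setIntegral_le_energyR (k : ℝ → ℝ) :
    ENNReal.ofReal (∫ t in G, ∫ s in G, k (t - s) ∂μ ∂μ)
      ≤ energyR (fun x => ENNReal.ofReal (k x)) G μ :=
  (ofReal_integral_le_lintegral_ofReal _ _).trans
    (lintegral_mono fun _ => ofReal_integral_le_lintegral_ofReal _ _)

theorem energyR_mul_const_le (f : ℝ → ℝ≥0∞) (c : ℝ≥0∞) :
    energyR f G μ * c ≤ energyR (fun x => f x * c) G μ :=
  (lintegral_mul_const_le _ _).trans (lintegral_mono fun _ => lintegral_mul_const_le _ _)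

theorem energyR_lintegral [SFinite μ] {E : Type*} [MeasurableSpace E] (m : Measure E) [SFinite m]
    {f : E → ℝ → ℝ≥0∞} (hf : Measurable (Function.uncurry f)) :
    energyR (fun x => ∫⁻ ξ, f ξ x ∂m) G μ = ∫⁻ ξ, energyR (f ξ) G μ ∂m := by
  have h_inner : Measurable fun q : (ℝ × E) × ℝ => f q.1.2 (q.1.1 - q.2) :=
    hf.comp (by fun_prop : Measurable fun q : (ℝ × E) × ℝ => (q.1.2, q.1.1 - q.2))
  calc energyR (fun x => ∫⁻ ξ, f ξ x ∂m) G μ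
      = ∫⁻ t in G, ∫⁻ ξ, ∫⁻ s in G, f ξ (t - s) ∂μ ∂m ∂μ :=
        lintegral_congr fun t => lintegral_lintegral_swap
          (hf.comp (by fun_prop : Measurable fun p : ℝ × E => (p.2, t - p.1))).aemeasurable
    _ = ∫⁻ ξ, energyR (f ξ) G μ ∂m :=
        lintegral_lintegral_swap h_inner.lintegral_prod_right'.aemeasurable

end Energy

theorem capacityR_eq_zero_iff {f : ℝ → ℝ≥0∞} {G : Set ℝ} :
    capacityR f G = 0 ↔
      ∀ μ : Measure ℝ, IsProbabilityMeasure μ → μ Gᶜ = 0 → energyR f G μ = ⊤ := by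
  simp only [capacityR, ENNReal.inv_eq_zero, iInf_eq_top, and_imp]

theorem measurable_real_sign : Measurable Real.sign :=
  Measurable.ite measurableSet_Iio measurable_const
    (Measurable.ite measurableSet_Ioi measurable_const measurable_const)

section Exponent

variable {d : ℕ} {Ψ : EuclideanSpace ℝ (Fin d) → ℂ}

theorem measurable_uncurry_chi (hΨ : Measurable Ψ) : Measurable (Function.uncurry (chi Ψ)) := by
  have h_arg : Measurable fun p : EuclideanSpace ℝ (Fin d) × ℝ => Real.sign p.2 • p.1 :=
    (measurable_real_sign.comp measurable_snd).smul measurable_fst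
  have h_abs : Measurable fun p : EuclideanSpace ℝ (Fin d) × ℝ => ((-|p.2| : ℝ) : ℂ) := by
    fun_prop
  exact measurable_exp.comp (h_abs.mul (hΨ.comp h_arg))

theorem gplus_eq_lintegral_ofReal (γ x : ℝ) :
    gplus Ψ γ x = ∫⁻ ξ, ENNReal.ofReal (chi Ψ ξ x).re * ENNReal.ofReal ‖ξ‖ ^ (-γ) := by
  simp [gplus, ENNReal.ofReal_max]

theorem lintegral_energy_re_chi_le_energyR_gplus (hΨ : Measurable Ψ) (γ : ℝ) (G : Set ℝ)
    (μ : Measure ℝ) [SFinite μ] :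
    ∫⁻ ξ, ENNReal.ofReal (∫ t in G, ∫ s in G, (chi Ψ ξ (t - s)).re ∂μ ∂μ)
        * ENNReal.ofReal ‖ξ‖ ^ (-γ)
      ≤ energyR (gplus Ψ γ) G μ := by
  let f (ξ : EuclideanSpace ℝ (Fin d)) (x : ℝ) : ℝ≥0∞ :=
    ENNReal.ofReal (chi Ψ ξ x).re * ENNReal.ofReal ‖ξ‖ ^ (-γ)
  have hf : Measurable (Function.uncurry f) :=
    (measurable_re.comp (measurable_uncurry_chi hΨ)).ennreal_ofReal.mul (by fun_prop)
  calc ∫⁻ ξ, ENNReal.ofReal (∫ t in G, ∫ s in G, (chi Ψ ξ (t - s)).re ∂μ ∂μ)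
        * ENNReal.ofReal ‖ξ‖ ^ (-γ)
      ≤ ∫⁻ ξ, energyR (fun x => ENNReal.ofReal (chi Ψ ξ x).re) G μ * ENNReal.ofReal ‖ξ‖ ^ (-γ) := by
        gcongr with ξ
        exact ofReal_setIntegral_setIntegral_le_energyR G μ fun x => (chi Ψ ξ x).re
    _ ≤ ∫⁻ ξ, energyR (f ξ) G μ := lintegral_mono fun _ => energyR_mul_const_le G μ _ _
    _ = energyR (fun x => ∫⁻ ξ, f ξ x) G μ := (energyR_lintegral G μ volume hf).symm
    _ = energyR (gplus Ψ γ) G μ := by simp only [f, ← gplus_eq_lintegral_ofReal]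

theorem stmt8_general (hΨ : Measurable Ψ) (γ : ℝ) (G : Set ℝ)
    (h_top : ∀ μ : Measure ℝ, IsProbabilityMeasure μ → μ Gᶜ = 0 →
      ∫⁻ ξ, ENNReal.ofReal (∫ t in G, ∫ s in G, (chi Ψ ξ (t - s)).re ∂μ ∂μ)
        * ENNReal.ofReal ‖ξ‖ ^ (-γ) = ⊤) :
    capacityR (gplus Ψ γ) G = 0 :=
  capacityR_eq_zero_iff.2 fun μ hμ hμG =>
    eq_top_mono (lintegral_energy_re_chi_le_energyR_gplus hΨ γ G μ) (h_top μ hμ hμG)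

end Exponent

/-- **Theorem 2.1(c).** Assume the Khoshnevisan–Xiao equivalence for `X`:
`C_β(X(G)) = 0` a.s. iff `∫_{ℝ^d} E_{Re χ_ξ}(μ) ‖ξ‖^{β−d} dξ = ∞` for every
`μ ∈ P(G)`. Then `C_β(X(G)) = 0` a.s. implies `C_{g_{d−β,+}}(G) = 0`. -/
theorem stmt8 {d : ℕ} (hd : 1 ≤ d) (Ψ : EuclideanSpace ℝ (Fin d) → ℂ) (hΨ : Measurable Ψ)
    {Ω : Type*} [MeasurableSpace Ω] (P : Measure Ω) [IsProbabilityMeasure P]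
    (X : ℝ → Ω → EuclideanSpace ℝ (Fin d))
    (hXmeas : Measurable fun p : ℝ × Ω => X p.1 p.2)
    (hX : ∀ s t : ℝ, 0 ≤ s → s ≤ t → ∀ ξ : EuclideanSpace ℝ (Fin d),
      ∫ ω, Complex.exp ((⟪ξ, X t ω - X s ω⟫ : ℂ) * Complex.I) ∂P
        = Complex.exp (((-(t - s) : ℝ) : ℂ) * Ψ ξ))
    (G : Set ℝ) (hG : MeasurableSet G) (hG0 : G ⊆ Set.Ici 0)
    (β : ℝ) (hβ0 : 0 < β) (hβd : β < d)
    (hKX : (∀ᵐ ω ∂P, capacityBeta β ((fun t => X t ω) '' G) = 0) ↔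
      (∀ μ : Measure ℝ, IsProbabilityMeasure μ → μ Gᶜ = 0 →
        ∫⁻ ξ : EuclideanSpace ℝ (Fin d),
          ENNReal.ofReal (∫ t in G, ∫ s in G, (chi Ψ ξ (t - s)).re ∂μ ∂μ)
            * (ENNReal.ofReal ‖ξ‖) ^ (β - d) ∂volume = ⊤))
    (hcap0 : ∀ᵐ ω ∂P, capacityBeta β ((fun t => X t ω) '' G) = 0) :
    capacityR (gplus Ψ ((d : ℝ) - β)) G = 0 :=
  stmt8_general hΨ (d - β) G (by simpa only [neg_sub] using hKX.1 hcap0)
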